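/- Let τ > 0 and let γ be the centered Gaussian probability measure on ℝ with variance 2τ. Then every smooth function f : ℝ → [0,1] with bounded derivative satisfies the Bobkov inequality I(∫_ℝ f dγ) ≤ ∫_ℝ √(I(f(x))² + 2τ·f'(x)²) dγ(x). -/

import Mathlib

open Real MeasureTheory ProbabilityTheory

/-- The standard Gaussian density. -/
noncomputable def gaussPdf (z : ℝ) : ℝ := (Real.sqrt (2 * Real.pi))⁻¹ * Real.exp (-z ^ 2 / 2)

/-- The standard normal CDF. -/
noncomputable def Phi (r : ℝ) : ℝ := ∫ z in Set.Iic r, gaussPdf z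

/-- The inverse of the standard normal CDF. -/
noncomputable def PhiInv : ℝ → ℝ := Function.invFun Phi

/-- The Gaussian isoperimetric profile `I = φ ∘ Φ⁻¹`. -/
noncomputable def gaussI (a : ℝ) : ℝ := gaussPdf (PhiInv a)

open Filter Set Topology
open scoped Convolution NNReal

/-!
Write `I` for the profile and let `u` be the Mehler (Ornstein–Uhlenbeck) average of `f`. Since
`I' = -Φ⁻¹` and `I * I'' = -1`, the Cauchy–Schwarz inequality shows that `√(I(u)² + (∂u)²)` is a
subsolution of the Ornstein–Uhlenbeck equation. The Gaussian measure is invariant, which is Stein's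
integration by parts, so the mean of `√(I(u)² + (∂u)²)` increases along the interpolation from its
value `I(∫ f)` at `u = ∫ f` to its value `∫ √(I(f)² + f'²)` at `u = f`. This needs `f` to be smooth
with bounded derivatives and to stay away from `0` and `1`; the general case follows by shrinking
the range, mollification, cutoff and dominated convergence, and other means and variances by an
affine change of variables.
-/

theorem integral_mem_Icc {Ω : Type*} [MeasurableSpace Ω] {μ : Measure Ω}
    [IsProbabilityMeasure μ] {f : Ω → ℝ} {a b : ℝ} (hf : AEMeasurable f μ)
    (hfab : ∀ x, f x ∈ Icc a b) : ∫ x, f x ∂μ ∈ Icc a b :=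
  (convex_Icc a b).integral_mem isClosed_Icc (ae_of_all _ hfab)
    (.of_mem_Icc a b hf (ae_of_all _ hfab))

section GaussianMeasure

theorem hasDerivAt_gaussianPDFReal (m : ℝ) (v : ℝ≥0) (x : ℝ) :
    HasDerivAt (gaussianPDFReal m v) (-((x - m) / v) * gaussianPDFReal m v x) x := by
  have hexponent : HasDerivAt (fun y ↦ -(y - m) ^ 2 / (2 * v)) (-((x - m) / v)) x := by
    refine ((((hasDerivAt_id x).sub_const m).pow 2).neg.div_const (2 * (v : ℝ))).congr_deriv ?_
    simp only [id_eq]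
    rcases eq_or_ne (v : ℝ) 0 with hv | hv
    · simp [hv]
    · field
  refine (hexponent.exp.const_mul (√(2 * π * v))⁻¹).congr_deriv ?_
  rw [gaussianPDFReal_def]
  ring

theorem integrable_gaussianReal_iff {m : ℝ} {v : ℝ≥0} (hv : v ≠ 0) {g : ℝ → ℝ} :
    Integrable g (gaussianReal m v) ↔ Integrable fun x ↦ gaussianPDFReal m v x * g x := by
  rw [gaussianReal_of_var_ne_zero m hv, integrable_withDensity_iff_integrable_smul'
    (measurable_gaussianPDF m v) (ae_of_all _ fun _ ↦ gaussianPDF_lt_top)]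
  simp only [toReal_gaussianPDF, smul_eq_mul]

theorem integral_sub_mul_gaussianReal {m : ℝ} {v : ℝ≥0} {K K' : ℝ → ℝ}
    (hK : ∀ x, HasDerivAt K (K' x) x) (hKint : Integrable K (gaussianReal m v))
    (hKint' : Integrable K' (gaussianReal m v))
    (hmul : Integrable (fun x ↦ (x - m) * K x) (gaussianReal m v)) :
    ∫ x, (x - m) * K x ∂gaussianReal m v = v * ∫ x, K' x ∂gaussianReal m v := by
  rcases eq_or_ne v 0 with rfl | hv
  · simp
  have hv' : (v : ℝ) ≠ 0 := by exact_mod_cast hv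
  rw [integrable_gaussianReal_iff hv] at hKint hKint' hmul
  have hparts := integral_mul_deriv_eq_deriv_mul_of_integrable (fun x _ ↦ hK x)
    (fun x _ ↦ hasDerivAt_gaussianPDFReal m v x)
    ((hmul.const_mul (-(v : ℝ)⁻¹)).congr (ae_of_all _ fun x ↦ by
      simp only [Pi.mul_apply]; ring))
    (hKint'.congr (ae_of_all _ fun x ↦ mul_comm _ _))
    (hKint.congr (ae_of_all _ fun x ↦ mul_comm _ _))
  simp only [integral_gaussianReal_eq_integral_smul hv, smul_eq_mul]
  calc ∫ x, gaussianPDFReal m v x * ((x - m) * K x)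
      = -(v * ∫ x, K x * (-((x - m) / v) * gaussianPDFReal m v x)) := by
        rw [← integral_const_mul, ← integral_neg]
        congr with x
        field
    _ = v * ∫ x, gaussianPDFReal m v x * K' x := by
        simp only [hparts, mul_neg, neg_neg, mul_comm (K' _)]

theorem integrable_id_gaussianReal (m : ℝ) (v : ℝ≥0) :
    Integrable (fun x : ℝ ↦ x) (gaussianReal m v) :=
  (memLp_id_gaussianReal 1).integrable le_rfl

end GaussianMeasure

section GaussianProfile

theorem gaussPdf_eq_gaussianPDFReal : gaussPdf = gaussianPDFReal 0 1 := by
  funext z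
  simp [gaussPdf, gaussianPDFReal]

theorem gaussPdf_pos (z : ℝ) : 0 < gaussPdf z := by
  rw [gaussPdf_eq_gaussianPDFReal]
  exact gaussianPDFReal_pos 0 1 z one_ne_zero

theorem gaussPdf_le_one (z : ℝ) : gaussPdf z ≤ 1 := by
  have hsqrt : 1 ≤ √(2 * π) := one_le_sqrt.2 (by linarith [pi_gt_three])
  have hexp : rexp (-z ^ 2 / 2) ≤ 1 := exp_le_one_iff.2 (by linarith [sq_nonneg z])
  exact mul_le_one₀ (inv_le_one_of_one_le₀ hsqrt) (exp_nonneg _) hexp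

theorem hasDerivAt_gaussPdf (z : ℝ) : HasDerivAt gaussPdf (-z * gaussPdf z) z := by
  simpa [gaussPdf_eq_gaussianPDFReal] using hasDerivAt_gaussianPDFReal 0 1 z

theorem tendsto_gaussPdf_cocompact : Tendsto gaussPdf (cocompact ℝ) (𝓝 0) := by
  have hsq : Tendsto (fun z : ℝ ↦ z ^ 2 / 2) (cocompact ℝ) atTop := by
    simpa only [Function.comp_apply, norm_eq_abs, sq_abs] using
      ((tendsto_pow_atTop two_ne_zero).comp (tendsto_norm_cocompact_atTop (E := ℝ))
        |>.atTop_div_const (two_pos (α := ℝ)))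
  have hexp := (tendsto_exp_neg_atTop_nhds_zero.comp hsq).const_mul (√(2 * π))⁻¹
  rw [mul_zero] at hexp
  exact hexp.congr fun z ↦ by rw [Function.comp_apply, gaussPdf, neg_div]

theorem Phi_eq_cdf : Phi = cdf (gaussianReal 0 1) := by
  funext r
  rw [cdf_eq_real, measureReal_def, gaussianReal_apply_eq_integral 0 one_ne_zero,
    ENNReal.toReal_ofReal (integral_nonneg fun x ↦ gaussianPDFReal_nonneg 0 1 x), Phi,
    gaussPdf_eq_gaussianPDFReal]

theorem hasDerivAt_Phi (r : ℝ) : HasDerivAt Phi (gaussPdf r) r := by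
  have hcont : Continuous gaussPdf :=
    continuous_iff_continuousAt.2 fun z ↦ (hasDerivAt_gaussPdf z).continuousAt
  have h_int : Integrable gaussPdf :=
    gaussPdf_eq_gaussianPDFReal ▸ integrable_gaussianPDFReal 0 1
  have hPhi : Phi = fun u ↦ Phi 0 + ∫ x in (0 : ℝ)..u, gaussPdf x := by
    funext u
    rw [← intervalIntegral.integral_Iic_sub_Iic h_int.integrableOn h_int.integrableOn, Phi, Phi]
    ring
  rw [hPhi]
  exact (intervalIntegral.integral_hasDerivAt_right h_int.intervalIntegrable
    (hcont.stronglyMeasurableAtFilter _ _) hcont.continuousAt).const_add _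

theorem strictMono_Phi : StrictMono Phi :=
  strictMono_of_hasDerivAt_pos hasDerivAt_Phi gaussPdf_pos

theorem range_Phi : range Phi = Ioo 0 1 := by
  refine Subset.antisymm ?_ fun a ha ↦ ?_
  · rintro _ ⟨r, rfl⟩
    constructor
    · exact (Phi_eq_cdf ▸ cdf_nonneg _ _).trans_lt (strictMono_Phi (sub_one_lt r))
    · exact (strictMono_Phi (lt_add_one r)).trans_le (Phi_eq_cdf ▸ cdf_le_one _ _)
  · have hbot : Tendsto Phi atBot (𝓝 0) := Phi_eq_cdf ▸ tendsto_cdf_atBot _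
    have htop : Tendsto Phi atTop (𝓝 1) := Phi_eq_cdf ▸ tendsto_cdf_atTop _
    exact mem_range_of_exists_le_of_exists_ge
      (continuous_iff_continuousAt.2 fun z ↦ (hasDerivAt_Phi z).continuousAt)
      ((hbot.eventually_le_const ha.1).exists) ((htop.eventually_const_le ha.2).exists)

theorem PhiInv_Phi (r : ℝ) : PhiInv (Phi r) = r :=
  Function.leftInverse_invFun strictMono_Phi.injective r

theorem Phi_PhiInv {a : ℝ} (ha : a ∈ Ioo (0 : ℝ) 1) : Phi (PhiInv a) = a :=
  Function.invFun_eq (range_Phi ▸ ha : a ∈ range Phi)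

theorem strictMonoOn_PhiInv : StrictMonoOn PhiInv (Ioo 0 1) := fun a ha b hb hab ↦ by
  rwa [← strictMono_Phi.lt_iff_lt, Phi_PhiInv ha, Phi_PhiInv hb]

theorem hasDerivAt_PhiInv {a : ℝ} (ha : a ∈ Ioo (0 : ℝ) 1) :
    HasDerivAt PhiInv (gaussI a)⁻¹ a := by
  have hnhds : Ioo (0 : ℝ) 1 ∈ 𝓝 a := isOpen_Ioo.mem_nhds ha
  have himage : PhiInv '' Ioo 0 1 = univ :=
    eq_univ_of_forall fun r ↦ ⟨Phi r, range_Phi ▸ mem_range_self r, PhiInv_Phi r⟩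
  have hcont : ContinuousAt PhiInv a :=
    strictMonoOn_PhiInv.continuousAt_of_image_mem_nhds hnhds (himage ▸ univ_mem)
  exact .of_local_left_inverse hcont (hasDerivAt_Phi _) (gaussPdf_pos _).ne'
    (eventually_of_mem hnhds fun _ ↦ Phi_PhiInv)

theorem gaussI_pos (a : ℝ) : 0 < gaussI a := gaussPdf_pos _

theorem gaussI_le_one (a : ℝ) : gaussI a ≤ 1 := gaussPdf_le_one _

theorem hasDerivAt_gaussI {a : ℝ} (ha : a ∈ Ioo (0 : ℝ) 1) :
    HasDerivAt gaussI (-PhiInv a) a := by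
  refine ((hasDerivAt_gaussPdf (PhiInv a)).comp a (hasDerivAt_PhiInv ha)).congr_deriv ?_
  exact mul_inv_cancel_right₀ (gaussI_pos a).ne' _

theorem continuousOn_PhiInv : ContinuousOn PhiInv (Ioo 0 1) :=
  HasDerivAt.continuousOn fun _ ↦ hasDerivAt_PhiInv

theorem continuousOn_gaussI : ContinuousOn gaussI (Ioo 0 1) :=
  HasDerivAt.continuousOn fun _ ↦ hasDerivAt_gaussI

theorem gaussI_of_notMem {a : ℝ} (ha : a ∉ Ioo (0 : ℝ) 1) :
    gaussI a = gaussPdf (Classical.arbitrary ℝ) := by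
  rw [← range_Phi] at ha
  rw [gaussI, PhiInv, Function.invFun_neg ha]

theorem measurable_gaussI : Measurable gaussI := by
  classical
  have hpiecewise : gaussI = (Ioo (0 : ℝ) 1).piecewise gaussI
      (fun _ ↦ gaussPdf (Classical.arbitrary ℝ)) := by
    funext a
    by_cases ha : a ∈ Ioo (0 : ℝ) 1 <;> simp [ha, gaussI_of_notMem]
  rw [hpiecewise]
  exact continuousOn_gaussI.measurable_piecewise continuousOn_const measurableSet_Ioo

theorem tendsto_PhiInv_nhdsWithin_zero : Tendsto PhiInv (𝓝[Ioo 0 1] 0) atBot := by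
  refine tendsto_atBot.2 fun r ↦ ?_
  have hr : 0 < Phi r := (range_Phi ▸ mem_range_self r : Phi r ∈ Ioo 0 1).1
  filter_upwards [self_mem_nhdsWithin, mem_nhdsWithin_of_mem_nhds (Iic_mem_nhds hr)] with a ha har
  rwa [← strictMono_Phi.le_iff_le, Phi_PhiInv ha]

theorem tendsto_PhiInv_nhdsWithin_one : Tendsto PhiInv (𝓝[Ioo 0 1] 1) atTop := by
  refine tendsto_atTop.2 fun r ↦ ?_
  have hr : Phi r < 1 := (range_Phi ▸ mem_range_self r : Phi r ∈ Ioo 0 1).2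
  filter_upwards [self_mem_nhdsWithin, mem_nhdsWithin_of_mem_nhds (Ici_mem_nhds hr)] with a ha har
  rwa [← strictMono_Phi.le_iff_le, Phi_PhiInv ha]

/-- The Gaussian isoperimetric profile with its true boundary values `I(0) = I(1) = 0`. At `0` and
`1` the function `gaussI` takes instead the positive value that `Function.invFun` happens to
give. -/
noncomputable def gaussProfile : ℝ → ℝ := (Ioo 0 1).indicator gaussI

theorem gaussProfile_nonneg (a : ℝ) : 0 ≤ gaussProfile a :=
  indicator_nonneg (fun a _ ↦ (gaussI_pos a).le) a

theorem gaussProfile_le_gaussI (a : ℝ) : gaussProfile a ≤ gaussI a :=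
  indicator_le_self' (fun a _ ↦ (gaussI_pos a).le) a

theorem tendsto_gaussI_gaussProfile {a : ℝ} (ha : a ∈ Icc (0 : ℝ) 1) :
    Tendsto gaussI (𝓝[Ioo 0 1] a) (𝓝 (gaussProfile a)) := by
  rcases eq_endpoints_or_mem_Ioo_of_mem_Icc ha with rfl | rfl | ha
  · rw [gaussProfile, indicator_of_notMem left_notMem_Ioo]
    exact tendsto_gaussPdf_cocompact.comp
      (tendsto_PhiInv_nhdsWithin_zero.mono_right atBot_le_cocompact)
  · rw [gaussProfile, indicator_of_notMem right_notMem_Ioo]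
    exact tendsto_gaussPdf_cocompact.comp
      (tendsto_PhiInv_nhdsWithin_one.mono_right atTop_le_cocompact)
  · rw [gaussProfile, indicator_of_mem ha]
    exact continuousOn_gaussI a ha

theorem continuousOn_gaussProfile : ContinuousOn gaussProfile (Icc 0 1) := by
  have hclosure : Icc (0 : ℝ) 1 ⊆ closure (Ioo 0 1) := (closure_Ioo zero_ne_one).ge
  exact (continuousOn_extendFrom hclosure fun a ha ↦ ⟨_, tendsto_gaussI_gaussProfile ha⟩).congr
    fun a ha ↦ (extendFrom_eq (hclosure ha) (tendsto_gaussI_gaussProfile ha)).symm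

theorem measurable_gaussProfile : Measurable gaussProfile :=
  measurable_gaussI.indicator measurableSet_Ioo

end GaussianProfile

/-- The class `C_b^n` of `n` times continuously differentiable functions on `ℝ` all of whose
derivatives of order at most `n`, including the function itself, are bounded. -/
structure BddContDiff (n : ℕ) (f : ℝ → ℝ) : Prop where
  contDiff : ContDiff ℝ n f
  exists_bound : ∀ k ≤ n, ∃ M, ∀ x, |iteratedDeriv k f x| ≤ M

namespace BddContDiff

variable {m n : ℕ} {f : ℝ → ℝ}

protected theorem continuous (hf : BddContDiff n f) : Continuous f := hf.contDiff.continuous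

theorem exists_abs_le (hf : BddContDiff n f) : ∃ M, ∀ x, |f x| ≤ M := by
  simpa using hf.exists_bound 0 n.zero_le

theorem of_le (hf : BddContDiff n f) (hmn : m ≤ n) : BddContDiff m f :=
  ⟨hf.contDiff.of_le (mod_cast hmn), fun k hk ↦ hf.exists_bound k (hk.trans hmn)⟩

protected theorem hasDerivAt (hf : BddContDiff (n + 1) f) (x : ℝ) : HasDerivAt f (deriv f x) x :=
  (hf.contDiff.differentiable (by simp) x).hasDerivAt

protected theorem deriv (hf : BddContDiff (n + 1) f) : BddContDiff n (deriv f) where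
  contDiff := (contDiff_succ_iff_deriv.1 (mod_cast hf.contDiff)).2.2
  exists_bound k hk := by
    simpa only [iteratedDeriv_succ'] using hf.exists_bound (k + 1) (Nat.succ_le_succ hk)

theorem of_hasCompactSupport_deriv (hf : ContDiff ℝ n f) {M : ℝ} (hM : ∀ x, |f x| ≤ M)
    (hsupp : HasCompactSupport (deriv f)) : BddContDiff n f where
  contDiff := hf
  exists_bound
    | 0, _ => ⟨M, by simpa using hM⟩
    | k + 1, hk => by
      have hcont : Continuous (iteratedDeriv (k + 1) f) :=
        hf.continuous_iteratedDeriv _ (mod_cast hk)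
      have hcompact : HasCompactSupport (iteratedDeriv (k + 1) f) := by
        rw [iteratedDeriv_succ', iteratedDeriv_eq_equiv_comp]
        exact (hsupp.iteratedFDeriv k).comp_left (map_zero _)
      exact hcompact.exists_bound_of_continuous hcont

end BddContDiff

/-- The Mehler average of `f` at `w`: the mean of `f (sin θ * w + cos θ * Z)` for a standard
Gaussian `Z`. It is the Ornstein–Uhlenbeck semigroup at the time `t` with `exp (-t) = sin θ`; the
angle keeps the family smooth up to the ends `θ = 0`, which is `t = ∞`, and `θ = π / 2`, which is
`t = 0`. -/
noncomputable def mehler (f : ℝ → ℝ) (θ w : ℝ) : ℝ :=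
  ∫ z, f (sin θ * w + cos θ * z) ∂gaussianReal 0 1

section Mehler

variable {f : ℝ → ℝ}

theorem mehler_zero (f : ℝ → ℝ) (w : ℝ) : mehler f 0 w = ∫ z, f z ∂gaussianReal 0 1 := by
  simp [mehler]

theorem mehler_pi_div_two (f : ℝ → ℝ) (w : ℝ) : mehler f (π / 2) w = f w := by
  simp [mehler]

theorem abs_mul_le_of_abs_le_one {c x M : ℝ} (hc : |c| ≤ 1) (hx : |x| ≤ M) : |c * x| ≤ M := by
  rw [abs_mul]
  exact (mul_le_of_le_one_left (abs_nonneg x) hc).trans hx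

theorem abs_sin_pow_le_one (θ : ℝ) (k : ℕ) : |sin θ ^ k| ≤ 1 := by
  rw [abs_pow]
  exact pow_le_one₀ (abs_nonneg _) (abs_sin_le_one θ)

theorem abs_mehler_le {M : ℝ} (hM : ∀ x, |f x| ≤ M) (θ w : ℝ) : |mehler f θ w| ≤ M := by
  simpa [mehler] using norm_integral_le_of_norm_le_const (μ := gaussianReal 0 1)
    (f := fun z ↦ f (sin θ * w + cos θ * z)) (ae_of_all _ fun z ↦ hM _)

theorem BddContDiff.integrable_comp_sin_add_cos {n : ℕ} (hf : BddContDiff n f) (θ w : ℝ) :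
    Integrable (fun z ↦ f (sin θ * w + cos θ * z)) (gaussianReal 0 1) := by
  obtain ⟨M, hM⟩ := hf.exists_abs_le
  exact .of_bound (hf.continuous.comp (by fun_prop)).aestronglyMeasurable M
    (ae_of_all _ fun z ↦ hM _)

theorem BddContDiff.integrable_mul_comp_sin_add_cos {n : ℕ} (hf : BddContDiff n f) (θ w : ℝ) :
    Integrable (fun z ↦ z * f (sin θ * w + cos θ * z)) (gaussianReal 0 1) := by
  obtain ⟨M, hM⟩ := hf.exists_abs_le
  exact (integrable_id_gaussianReal 0 1).mul_bdd
    (hf.integrable_comp_sin_add_cos θ w).aestronglyMeasurable (ae_of_all _ fun z ↦ hM _)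

theorem mehler_mem_Icc {n : ℕ} (hf : BddContDiff n f) {a b : ℝ} (hfab : ∀ x, f x ∈ Icc a b)
    (θ w : ℝ) : mehler f θ w ∈ Icc a b :=
  integral_mem_Icc (hf.integrable_comp_sin_add_cos θ w).aemeasurable fun _ ↦ hfab _

theorem continuous_uncurry_mehler {n : ℕ} (hf : BddContDiff n f) :
    Continuous (Function.uncurry (mehler f)) := by
  obtain ⟨M, hM⟩ := hf.exists_abs_le
  have hcont := hf.continuous
  exact continuous_of_dominated (bound := fun _ ↦ M)
    (fun p ↦ (hf.integrable_comp_sin_add_cos p.1 p.2).aestronglyMeasurable)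
    (fun p ↦ ae_of_all _ fun z ↦ hM _) (integrable_const _) (ae_of_all _ fun z ↦ by fun_prop)

theorem hasDerivAt_mehler (hf : BddContDiff 1 f) (θ w : ℝ) :
    HasDerivAt (mehler f θ) (sin θ * mehler (deriv f) θ w) w := by
  obtain ⟨M, hM⟩ := hf.deriv.exists_abs_le
  have hderiv (z x : ℝ) : HasDerivAt (fun x ↦ f (sin θ * x + cos θ * z))
      (sin θ * deriv f (sin θ * x + cos θ * z)) x := by
    have hinner : HasDerivAt (fun x ↦ sin θ * x + cos θ * z) (sin θ) x := by
      simpa using ((hasDerivAt_id x).const_mul (sin θ)).add_const (cos θ * z)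
    exact ((hf.hasDerivAt _).comp x hinner).congr_deriv (mul_comm _ _)
  rw [mehler, ← integral_const_mul]
  refine (hasDerivAt_integral_of_dominated_loc_of_deriv_le (bound := fun _ ↦ M) univ_mem
    (.of_forall fun x ↦ (hf.integrable_comp_sin_add_cos θ x).aestronglyMeasurable)
    (hf.integrable_comp_sin_add_cos θ w)
    ((hf.deriv.integrable_comp_sin_add_cos θ w).const_mul _).aestronglyMeasurable
    (ae_of_all _ fun z x _ ↦ ?_) (integrable_const _) (ae_of_all _ fun z x _ ↦ hderiv z x)).2
  exact abs_mul_le_of_abs_le_one (abs_sin_le_one θ) (hM _)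

theorem hasDerivAt_mehler_angle_integral (hf : BddContDiff 1 f) (θ w : ℝ) :
    HasDerivAt (fun θ ↦ mehler f θ w)
      (∫ z, (cos θ * w - sin θ * z) * deriv f (sin θ * w + cos θ * z) ∂gaussianReal 0 1) θ := by
  obtain ⟨M, hM⟩ := hf.deriv.exists_abs_le
  have hderiv (z θ : ℝ) : HasDerivAt (fun θ ↦ f (sin θ * w + cos θ * z))
      ((cos θ * w - sin θ * z) * deriv f (sin θ * w + cos θ * z)) θ := by
    have hinner : HasDerivAt (fun θ ↦ sin θ * w + cos θ * z) (cos θ * w - sin θ * z) θ :=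
      (((hasDerivAt_sin θ).mul_const w).add ((hasDerivAt_cos θ).mul_const z)).congr_deriv (by ring)
    exact ((hf.hasDerivAt _).comp θ hinner).congr_deriv (mul_comm _ _)
  have hspeed (θ z : ℝ) : |cos θ * w - sin θ * z| ≤ |w| + |z| := by
    refine (abs_sub _ _).trans ?_
    rw [abs_mul, abs_mul]
    exact add_le_add (mul_le_of_le_one_left (abs_nonneg w) (abs_cos_le_one θ))
      (mul_le_of_le_one_left (abs_nonneg z) (abs_sin_le_one θ))
  refine (hasDerivAt_integral_of_dominated_loc_of_deriv_le (bound := fun z ↦ (|w| + |z|) * M)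
    univ_mem (.of_forall fun x ↦ (hf.integrable_comp_sin_add_cos x w).aestronglyMeasurable)
    (hf.integrable_comp_sin_add_cos θ w) ?_ (ae_of_all _ fun z x _ ↦ ?_)
    (((integrable_const _).add (integrable_id_gaussianReal 0 1).abs).mul_const M)
    (ae_of_all _ fun z x _ ↦ hderiv z x)).2
  · exact (by fun_prop : Continuous fun z ↦ cos θ * w - sin θ * z).aestronglyMeasurable.mul
      (hf.deriv.integrable_comp_sin_add_cos θ w).aestronglyMeasurable
  · rw [norm_eq_abs, abs_mul]
    exact mul_le_mul (hspeed x z) (hM _) (abs_nonneg _) (by positivity)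

theorem integral_mul_comp_sin_add_cos (hf : BddContDiff 1 f) (θ w : ℝ) :
    ∫ z, z * f (sin θ * w + cos θ * z) ∂gaussianReal 0 1 = cos θ * mehler (deriv f) θ w := by
  have hderiv (z : ℝ) : HasDerivAt (fun z ↦ f (sin θ * w + cos θ * z))
      (cos θ * deriv f (sin θ * w + cos θ * z)) z := by
    have hinner : HasDerivAt (fun z ↦ sin θ * w + cos θ * z) (cos θ) z := by
      simpa using ((hasDerivAt_id z).const_mul (cos θ)).const_add (sin θ * w)
    exact ((hf.hasDerivAt _).comp z hinner).congr_deriv (mul_comm _ _)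
  have hstein := integral_sub_mul_gaussianReal hderiv (hf.integrable_comp_sin_add_cos θ w)
    ((hf.deriv.integrable_comp_sin_add_cos θ w).const_mul _)
    (by simpa only [sub_zero] using hf.integrable_mul_comp_sin_add_cos θ w)
  simpa only [sub_zero, NNReal.coe_one, one_mul, integral_const_mul, mehler] using hstein

theorem hasDerivAt_mehler_angle (hf : BddContDiff 2 f) (θ w : ℝ) :
    HasDerivAt (fun θ ↦ mehler f θ w)
      (cos θ * (w * mehler (deriv f) θ w - sin θ * mehler (deriv (deriv f)) θ w)) θ := by
  have h_int := hf.deriv.integrable_comp_sin_add_cos θ w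
  have hmul := hf.deriv.integrable_mul_comp_sin_add_cos θ w
  refine (hasDerivAt_mehler_angle_integral (hf.of_le one_le_two) θ w).congr_deriv ?_
  calc ∫ z, (cos θ * w - sin θ * z) * deriv f (sin θ * w + cos θ * z) ∂gaussianReal 0 1
      = cos θ * w * mehler (deriv f) θ w
          - sin θ * ∫ z, z * deriv f (sin θ * w + cos θ * z) ∂gaussianReal 0 1 := by
        rw [mehler, ← integral_const_mul, ← integral_const_mul,
          ← integral_sub (h_int.const_mul _) (hmul.const_mul _)]
        congr with z
        ring
    _ = cos θ * (w * mehler (deriv f) θ w - sin θ * mehler (deriv (deriv f)) θ w) := by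
        rw [integral_mul_comp_sin_add_cos hf.deriv]
        ring

end Mehler

/-- The integrand `√(I(a)² + b²)` of Bobkov's inequality, as a function of the value `a` and the
slope `b`. -/
noncomputable def bobkovNorm (a b : ℝ) : ℝ := √(gaussI a ^ 2 + b ^ 2)

/-- The derivative of `bobkovNorm` at `(a, b)` in the direction `(a', b')`, computed with
`I' = -Φ⁻¹`. -/
noncomputable def bobkovSlope (a b a' b' : ℝ) : ℝ :=
  (b * b' - gaussI a * PhiInv a * a') / bobkovNorm a b

/-- The second derivative of `bobkovNorm u u'` for a function `u` whose derivatives of order `0`,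
`1`, `2` and `3` take the values `a`, `b`, `b'` and `b''`. -/
noncomputable def bobkovCurvature (a b b' b'' : ℝ) : ℝ :=
  (b' ^ 2 + b * b'' - (1 - PhiInv a ^ 2) * b ^ 2 - gaussI a * PhiInv a * b'
    - bobkovSlope a b b b' ^ 2) / bobkovNorm a b

section BobkovNorm

theorem bobkovNorm_pos (a b : ℝ) : 0 < bobkovNorm a b :=
  sqrt_pos.2 (add_pos_of_pos_of_nonneg (pow_pos (gaussI_pos a) 2) (sq_nonneg b))

theorem sq_bobkovNorm (a b : ℝ) : bobkovNorm a b ^ 2 = gaussI a ^ 2 + b ^ 2 :=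
  sq_sqrt (by positivity)

theorem bobkovNorm_zero (a : ℝ) : bobkovNorm a 0 = gaussI a := by
  rw [bobkovNorm, zero_pow two_ne_zero, add_zero, sqrt_sq (gaussI_pos a).le]

theorem bobkovNorm_le (a b : ℝ) : bobkovNorm a b ≤ 1 + |b| := by
  refine sqrt_le_iff.2 ⟨by positivity, ?_⟩
  have hgauss : gaussI a ^ 2 ≤ 1 := pow_le_one₀ (gaussI_pos a).le (gaussI_le_one a)
  linarith [abs_nonneg b, sq_abs b, add_sq 1 |b|]

theorem continuousOn_bobkovNorm :
    ContinuousOn (Function.uncurry bobkovNorm) (Ioo 0 1 ×ˢ univ) :=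
  (((continuousOn_gaussI.comp continuousOn_fst fun _ hp ↦ hp.1).pow 2).add
    (continuousOn_snd.pow 2)).sqrt

theorem hasDerivAt_bobkovNorm {a b : ℝ → ℝ} {a' b' x : ℝ} (hax : a x ∈ Ioo (0 : ℝ) 1)
    (ha : HasDerivAt a a' x) (hb : HasDerivAt b b' x) :
    HasDerivAt (fun y ↦ bobkovNorm (a y) (b y)) (bobkovSlope (a x) (b x) a' b') x := by
  have hsq := (((hasDerivAt_gaussI hax).comp x ha).pow 2).add (hb.pow 2)
  refine (hsq.sqrt (sqrt_pos.1 (bobkovNorm_pos (a x) (b x))).ne').congr_deriv ?_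
  have hpos := bobkovNorm_pos (a x) (b x)
  simp only [bobkovSlope, bobkovNorm, Pi.add_apply, Pi.pow_apply, Function.comp_apply] at hpos ⊢
  field_simp
  ring

-- Cauchy–Schwarz: `bobkovNorm a b` is the length of the vector `(I(a), b)`, and moving `(a, b)`
-- with velocity `(a', b')` moves that vector with velocity `(-Φ⁻¹(a) * a', b')`.
theorem sq_bobkovSlope_le (a b a' b' : ℝ) :
    bobkovSlope a b a' b' ^ 2 ≤ (PhiInv a * a') ^ 2 + b' ^ 2 := by
  rw [bobkovSlope, div_pow, div_le_iff₀ (pow_pos (bobkovNorm_pos a b) 2), sq_bobkovNorm]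
  linarith [sq_nonneg (gaussI a * b' + b * (PhiInv a * a'))]

theorem abs_bobkovSlope_le (a b a' b' : ℝ) :
    |bobkovSlope a b a' b'| ≤ |PhiInv a| * |a'| + |b'| := by
  rw [← abs_mul]
  refine abs_le_of_sq_le_sq ((sq_bobkovSlope_le a b a' b').trans ?_) (by positivity)
  rw [add_sq, sq_abs, sq_abs]
  linarith [mul_nonneg (abs_nonneg (PhiInv a * a')) (abs_nonneg b')]

theorem hasDerivAt_gaussI_mul_PhiInv {a : ℝ} (ha : a ∈ Ioo (0 : ℝ) 1) :
    HasDerivAt (fun a ↦ gaussI a * PhiInv a) (1 - PhiInv a ^ 2) a := by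
  refine ((hasDerivAt_gaussI ha).mul (hasDerivAt_PhiInv ha)).congr_deriv ?_
  rw [mul_inv_cancel₀ (gaussI_pos a).ne']
  ring

theorem hasDerivAt_bobkovSlope {a b b' : ℝ → ℝ} {b'' x : ℝ} (hax : a x ∈ Ioo (0 : ℝ) 1)
    (ha : HasDerivAt a (b x) x) (hb : HasDerivAt b (b' x) x) (hb' : HasDerivAt b' b'' x) :
    HasDerivAt (fun y ↦ bobkovSlope (a y) (b y) (b y) (b' y))
      (bobkovCurvature (a x) (b x) (b' x) b'') x := by
  have hne := (bobkovNorm_pos (a x) (b x)).ne'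
  have hnum := (hb.mul hb').sub (((hasDerivAt_gaussI_mul_PhiInv hax).comp x ha).mul hb)
  refine (hnum.div (hasDerivAt_bobkovNorm hax ha hb) hne).congr_deriv ?_
  simp only [bobkovCurvature, bobkovSlope, Pi.sub_apply, Pi.mul_apply, Function.comp_apply]
  field_simp
  ring

theorem bobkovSlope_le_bobkovCurvature (a b b' b'' : ℝ) :
    bobkovSlope a b b' (b'' - b) ≤ bobkovCurvature a b b' b'' := by
  refine div_le_div_of_nonneg_right ?_ (bobkovNorm_pos a b).le
  linarith [sq_bobkovSlope_le a b b b', mul_pow (PhiInv a) b 2]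

theorem continuousOn_bobkovCurvature :
    ContinuousOn (fun p : ℝ × ℝ × ℝ × ℝ ↦ bobkovCurvature p.1 p.2.1 p.2.2.1 p.2.2.2)
      (Ioo 0 1 ×ˢ univ) := by
  have hI : ContinuousOn (fun p : ℝ × ℝ × ℝ × ℝ ↦ gaussI p.1) (Ioo 0 1 ×ˢ univ) :=
    continuousOn_gaussI.comp continuousOn_fst fun _ hp ↦ hp.1
  have hPhiInv : ContinuousOn (fun p : ℝ × ℝ × ℝ × ℝ ↦ PhiInv p.1) (Ioo 0 1 ×ˢ univ) :=
    continuousOn_PhiInv.comp continuousOn_fst fun _ hp ↦ hp.1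
  have hN : ContinuousOn (fun p : ℝ × ℝ × ℝ × ℝ ↦ bobkovNorm p.1 p.2.1) (Ioo 0 1 ×ˢ univ) :=
    continuousOn_bobkovNorm.comp (f := fun p : ℝ × ℝ × ℝ × ℝ ↦ (p.1, p.2.1)) (by fun_prop)
      fun _ hp ↦ ⟨hp.1, trivial⟩
  have hN₀ : ∀ p ∈ (Ioo (0 : ℝ) 1 ×ˢ (univ : Set (ℝ × ℝ × ℝ))), bobkovNorm p.1 p.2.1 ≠ 0 :=
    fun p _ ↦ (bobkovNorm_pos p.1 p.2.1).ne'
  unfold bobkovCurvature bobkovSlope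
  fun_prop (disch := assumption)

theorem exists_abs_PhiInv_le {ε : ℝ} (hε : 0 < ε) :
    ∃ V, ∀ a ∈ Icc ε (1 - ε), |PhiInv a| ≤ V :=
  isCompact_Icc.exists_bound_of_continuousOn
    (continuousOn_PhiInv.mono (Icc_subset_Ioo hε (sub_lt_self 1 hε)))

theorem exists_abs_bobkovCurvature_le {ε : ℝ} (hε : 0 < ε) (M : ℝ) :
    ∃ B, ∀ a ∈ Icc ε (1 - ε), ∀ b b' b'', |b| ≤ M → |b'| ≤ M → |b''| ≤ M →
      |bobkovCurvature a b b' b''| ≤ B := by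
  obtain ⟨B, hB⟩ := (isCompact_Icc.prod (isCompact_Icc.prod
    (isCompact_Icc.prod isCompact_Icc))).exists_bound_of_continuousOn
    (continuousOn_bobkovCurvature.mono (prod_mono (Icc_subset_Ioo hε (sub_lt_self 1 hε))
      (subset_univ (Icc (-M) M ×ˢ Icc (-M) M ×ˢ Icc (-M) M))))
  exact ⟨B, fun a ha b b' b'' hb hb' hb'' ↦
    hB (a, b, b', b'') ⟨ha, abs_le.1 hb, abs_le.1 hb', abs_le.1 hb''⟩⟩

end BobkovNorm

theorem integrable_mul_sub_and_integral_eq_zero {g g' : ℝ → ℝ} {C D : ℝ}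
    (hg : ∀ w, HasDerivAt g (g' w) w) (hC : ∀ w, |g w| ≤ C) (hD : ∀ w, |g' w| ≤ D) :
    Integrable (fun w ↦ w * g w - g' w) (gaussianReal 0 1) ∧
      ∫ w, (w * g w - g' w) ∂gaussianReal 0 1 = 0 := by
  have hg_meas : AEStronglyMeasurable g (gaussianReal 0 1) :=
    (continuous_iff_continuousAt.2 fun w ↦ (hg w).continuousAt).aestronglyMeasurable
  have hg'_int : Integrable g' (gaussianReal 0 1) := by
    have hderiv : deriv g = g' := funext fun w ↦ (hg w).deriv
    exact .of_bound (hderiv ▸ (measurable_deriv g).aestronglyMeasurable) D (ae_of_all _ hD)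
  have hmul : Integrable (fun w ↦ w * g w) (gaussianReal 0 1) :=
    (integrable_id_gaussianReal 0 1).mul_bdd hg_meas (ae_of_all _ hC)
  have hstein := integral_sub_mul_gaussianReal hg (.of_bound hg_meas C (ae_of_all _ hC)) hg'_int
    (by simpa only [sub_zero] using hmul)
  simp only [sub_zero, NNReal.coe_one, one_mul] at hstein
  exact ⟨hmul.sub hg'_int, by rw [integral_sub hmul hg'_int, hstein, sub_self]⟩

theorem monotoneOn_integral_of_divergence_le {G Gθ K K' : ℝ → ℝ → ℝ} {A B C D : ℝ}
    (hG : Continuous (Function.uncurry G))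
    (hGθ : ∀ θ w, HasDerivAt (fun θ ↦ G θ w) (Gθ θ w) θ)
    (hK : ∀ θ w, HasDerivAt (K θ) (K' θ w) w)
    (hA : ∀ θ w, |G θ w| ≤ A) (hB : ∀ θ w, |Gθ θ w| ≤ B * (1 + |w|))
    (hC : ∀ θ w, |K θ w| ≤ C) (hD : ∀ θ w, |K' θ w| ≤ D)
    (hsub : ∀ θ ∈ Ioo 0 (π / 2), ∀ w, cos θ * (w * K θ w - K' θ w) ≤ sin θ * Gθ θ w) :
    MonotoneOn (fun θ ↦ ∫ w, G θ w ∂gaussianReal 0 1) (Icc 0 (π / 2)) := by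
  have hGθ_meas : Measurable (Function.uncurry Gθ) := by
    have hderiv : (fun p : ℝ × ℝ ↦ deriv (fun θ ↦ G θ p.2) p.1) = Function.uncurry Gθ :=
      funext fun p ↦ (hGθ p.1 p.2).deriv
    exact hderiv ▸ (measurable_deriv_with_param (f := fun w θ ↦ G θ w)
      (hG.comp continuous_swap)).comp measurable_swap
  have hdiff (θ : ℝ) := hasDerivAt_integral_of_dominated_loc_of_deriv_le
    (bound := fun w ↦ B * (1 + |w|)) univ_mem
    (.of_forall fun θ ↦ (hG.uncurry_left θ).aestronglyMeasurable)
    (.of_bound (hG.uncurry_left θ).aestronglyMeasurable A (ae_of_all _ fun w ↦ hA θ w))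
    hGθ_meas.of_uncurry_left.aestronglyMeasurable (ae_of_all _ fun w θ _ ↦ hB θ w)
    (((integrable_const 1).add (integrable_id_gaussianReal 0 1).abs).const_mul B)
    (ae_of_all _ fun w θ _ ↦ hGθ θ w)
  refine monotoneOn_of_deriv_nonneg (convex_Icc _ _)
    (fun θ _ ↦ (hdiff θ).2.continuousAt.continuousWithinAt)
    (fun θ _ ↦ (hdiff θ).2.differentiableAt.differentiableWithinAt) fun θ hθ ↦ ?_
  rw [interior_Icc] at hθ
  have hsin : 0 < sin θ := sin_pos_of_pos_of_lt_pi hθ.1 (by linarith [hθ.2, pi_pos])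
  obtain ⟨h_int, hzero⟩ := integrable_mul_sub_and_integral_eq_zero (hK θ) (hC θ) (hD θ)
  rw [(hdiff θ).2.deriv, ← mul_nonneg_iff_of_pos_left hsin]
  calc (0 : ℝ) = ∫ w, cos θ * (w * K θ w - K' θ w) ∂gaussianReal 0 1 := by
        rw [integral_const_mul, hzero, mul_zero]
    _ ≤ ∫ w, sin θ * Gθ θ w ∂gaussianReal 0 1 :=
        integral_mono (h_int.const_mul _) ((hdiff θ).1.const_mul _) (hsub θ hθ)
    _ = sin θ * ∫ w, Gθ θ w ∂gaussianReal 0 1 := integral_const_mul _ _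

/-- The integrand of Bobkov's inequality for the Mehler average `u = mehler f θ`, whose derivative
is `sin θ * mehler (deriv f) θ`. -/
noncomputable def bobkovFlow (f : ℝ → ℝ) (θ w : ℝ) : ℝ :=
  bobkovNorm (mehler f θ w) (sin θ * mehler (deriv f) θ w)

/-- The derivative of `bobkovFlow f` in the angle `θ`. -/
noncomputable def bobkovFlowAngleDeriv (f : ℝ → ℝ) (θ w : ℝ) : ℝ :=
  bobkovSlope (mehler f θ w) (sin θ * mehler (deriv f) θ w)
    (cos θ * (w * mehler (deriv f) θ w - sin θ * mehler (deriv (deriv f)) θ w))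
    (cos θ * mehler (deriv f) θ w + sin θ * (cos θ *
      (w * mehler (deriv (deriv f)) θ w - sin θ * mehler (deriv (deriv (deriv f))) θ w)))

/-- The derivative of `bobkovFlow f` in the space variable `w`. -/
noncomputable def bobkovFlowSpaceDeriv (f : ℝ → ℝ) (θ w : ℝ) : ℝ :=
  bobkovSlope (mehler f θ w) (sin θ * mehler (deriv f) θ w) (sin θ * mehler (deriv f) θ w)
    (sin θ ^ 2 * mehler (deriv (deriv f)) θ w)

/-- The second derivative of `bobkovFlow f` in the space variable `w`. -/
noncomputable def bobkovFlowSpaceDeriv2 (f : ℝ → ℝ) (θ w : ℝ) : ℝ :=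
  bobkovCurvature (mehler f θ w) (sin θ * mehler (deriv f) θ w)
    (sin θ ^ 2 * mehler (deriv (deriv f)) θ w) (sin θ ^ 3 * mehler (deriv (deriv (deriv f))) θ w)

theorem bobkovFlow_subsolution (f : ℝ → ℝ) {θ : ℝ} (hθ : 0 ≤ cos θ) (w : ℝ) :
    cos θ * (w * bobkovFlowSpaceDeriv f θ w - bobkovFlowSpaceDeriv2 f θ w) ≤
      sin θ * bobkovFlowAngleDeriv f θ w := by
  set a := mehler f θ w
  set b := sin θ * mehler (deriv f) θ w with hb
  set b' := sin θ ^ 2 * mehler (deriv (deriv f)) θ w with hb'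
  set b'' := sin θ ^ 3 * mehler (deriv (deriv (deriv f))) θ w with hb''
  calc cos θ * (w * bobkovSlope a b b b' - bobkovCurvature a b b' b'')
      ≤ cos θ * (w * bobkovSlope a b b b' - bobkovSlope a b b' (b'' - b)) :=
        mul_le_mul_of_nonneg_left (sub_le_sub_left (bobkovSlope_le_bobkovCurvature a b b' b'') _) hθ
    _ = sin θ * bobkovFlowAngleDeriv f θ w := by
        simp only [bobkovFlowAngleDeriv, bobkovSlope, ← hb]
        rw [mul_div_assoc', div_sub_div_same, mul_div_assoc', mul_div_assoc', hb', hb'', hb]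
        ring

section BobkovFlow

variable {f : ℝ → ℝ} {ε : ℝ}

theorem BddContDiff.mehler_mem_Ioo {n : ℕ} (hf : BddContDiff n f) (hε : 0 < ε)
    (hfε : ∀ x, f x ∈ Icc ε (1 - ε)) (θ w : ℝ) : mehler f θ w ∈ Ioo (0 : ℝ) 1 :=
  Icc_subset_Ioo hε (sub_lt_self 1 hε) (mehler_mem_Icc hf hfε θ w)

theorem continuous_uncurry_bobkovFlow (hf : BddContDiff 1 f) (hε : 0 < ε)
    (hfε : ∀ x, f x ∈ Icc ε (1 - ε)) : Continuous (Function.uncurry (bobkovFlow f)) :=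
  continuousOn_bobkovNorm.comp_continuous
    (f := fun p : ℝ × ℝ ↦ (mehler f p.1 p.2, sin p.1 * mehler (deriv f) p.1 p.2))
    ((continuous_uncurry_mehler hf).prodMk
      ((continuous_sin.comp continuous_fst).mul (continuous_uncurry_mehler hf.deriv)))
    fun p ↦ ⟨hf.mehler_mem_Ioo hε hfε p.1 p.2, trivial⟩

theorem hasDerivAt_bobkovFlow_angle (hf : BddContDiff 3 f) (hε : 0 < ε)
    (hfε : ∀ x, f x ∈ Icc ε (1 - ε)) (θ w : ℝ) :
    HasDerivAt (fun θ ↦ bobkovFlow f θ w) (bobkovFlowAngleDeriv f θ w) θ :=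
  hasDerivAt_bobkovNorm (hf.mehler_mem_Ioo hε hfε θ w)
    (hasDerivAt_mehler_angle (hf.of_le (by norm_num)) θ w)
    ((hasDerivAt_sin θ).mul (hasDerivAt_mehler_angle hf.deriv θ w))

theorem hasDerivAt_bobkovFlowSpaceDeriv (hf : BddContDiff 3 f) (hε : 0 < ε)
    (hfε : ∀ x, f x ∈ Icc ε (1 - ε)) (θ w : ℝ) :
    HasDerivAt (bobkovFlowSpaceDeriv f θ) (bobkovFlowSpaceDeriv2 f θ w) w := by
  refine hasDerivAt_bobkovSlope (hf.mehler_mem_Ioo hε hfε θ w)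
    (hasDerivAt_mehler (hf.of_le (by norm_num)) θ w) ?_ ?_
  · exact ((hasDerivAt_mehler (hf.deriv.of_le one_le_two) θ w).const_mul (sin θ)).congr_deriv
      (by ring)
  · exact ((hasDerivAt_mehler hf.deriv.deriv θ w).const_mul (sin θ ^ 2)).congr_deriv (by ring)

theorem abs_bobkovFlow_le {M : ℝ} (hM : ∀ x, |deriv f x| ≤ M) (θ w : ℝ) :
    |bobkovFlow f θ w| ≤ 1 + M := by
  rw [bobkovFlow, abs_of_pos (bobkovNorm_pos _ _)]
  exact (bobkovNorm_le _ _).trans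
    (add_le_add_right (abs_mul_le_of_abs_le_one (abs_sin_le_one θ) (abs_mehler_le hM θ w)) 1)

theorem BddContDiff.exists_abs_deriv_le (hf : BddContDiff 3 f) :
    ∃ M, (∀ x, |deriv f x| ≤ M) ∧ (∀ x, |deriv (deriv f) x| ≤ M) ∧
      ∀ x, |deriv (deriv (deriv f)) x| ≤ M := by
  obtain ⟨M₁, h₁⟩ := hf.deriv.exists_abs_le
  obtain ⟨M₂, h₂⟩ := hf.deriv.deriv.exists_abs_le
  obtain ⟨M₃, h₃⟩ := hf.deriv.deriv.deriv.exists_abs_le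
  exact ⟨max M₁ (max M₂ M₃), fun x ↦ le_max_of_le_left (h₁ x),
    fun x ↦ le_max_of_le_right (le_max_of_le_left (h₂ x)),
    fun x ↦ le_max_of_le_right (le_max_of_le_right (h₃ x))⟩

theorem exists_abs_bobkovFlowAngleDeriv_le (hf : BddContDiff 3 f) (hε : 0 < ε)
    (hfε : ∀ x, f x ∈ Icc ε (1 - ε)) :
    ∃ B, ∀ θ w, |bobkovFlowAngleDeriv f θ w| ≤ B * (1 + |w|) := by
  obtain ⟨M, h₁, h₂, h₃⟩ := hf.exists_abs_deriv_le
  obtain ⟨V, hV⟩ := exists_abs_PhiInv_le hε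
  have hM : 0 ≤ M := (abs_nonneg _).trans (h₁ 0)
  have hdrift {g h : ℝ → ℝ} (hg : ∀ x, |g x| ≤ M) (hh : ∀ x, |h x| ≤ M) (θ w : ℝ) :
      |cos θ * (w * mehler g θ w - sin θ * mehler h θ w)| ≤ M * (1 + |w|) := by
    refine abs_mul_le_of_abs_le_one (abs_cos_le_one θ) ((abs_sub _ _).trans ?_)
    rw [abs_mul w]
    linarith [mul_le_mul_of_nonneg_left (abs_mehler_le hg θ w) (abs_nonneg w),
      abs_mul_le_of_abs_le_one (abs_sin_le_one θ) (abs_mehler_le hh θ w)]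
  refine ⟨(V + 2) * M, fun θ w ↦ (abs_bobkovSlope_le _ _ _ _).trans ?_⟩
  have hvalue := mul_le_mul (hV _ (mehler_mem_Icc hf hfε θ w)) (hdrift h₁ h₂ θ w) (abs_nonneg _)
    ((abs_nonneg _).trans (hV _ (mehler_mem_Icc hf hfε θ w)))
  have hslope := (abs_add_le _ _).trans
    (add_le_add (abs_mul_le_of_abs_le_one (abs_cos_le_one θ) (abs_mehler_le h₁ θ w))
      (abs_mul_le_of_abs_le_one (abs_sin_le_one θ) (hdrift h₂ h₃ θ w)))
  linarith [mul_nonneg hM (abs_nonneg w)]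

theorem exists_abs_bobkovFlowSpaceDeriv_le (hf : BddContDiff 3 f) (hε : 0 < ε)
    (hfε : ∀ x, f x ∈ Icc ε (1 - ε)) : ∃ C, ∀ θ w, |bobkovFlowSpaceDeriv f θ w| ≤ C := by
  obtain ⟨M, h₁, h₂, -⟩ := hf.exists_abs_deriv_le
  obtain ⟨V, hV⟩ := exists_abs_PhiInv_le hε
  refine ⟨V * M + M, fun θ w ↦ (abs_bobkovSlope_le _ _ _ _).trans (add_le_add ?_ ?_)⟩
  · exact mul_le_mul (hV _ (mehler_mem_Icc hf hfε θ w))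
      (abs_mul_le_of_abs_le_one (abs_sin_le_one θ) (abs_mehler_le h₁ θ w)) (abs_nonneg _)
      ((abs_nonneg _).trans (hV _ (mehler_mem_Icc hf hfε θ w)))
  · exact abs_mul_le_of_abs_le_one (abs_sin_pow_le_one θ 2) (abs_mehler_le h₂ θ w)

theorem exists_abs_bobkovFlowSpaceDeriv2_le (hf : BddContDiff 3 f) (hε : 0 < ε)
    (hfε : ∀ x, f x ∈ Icc ε (1 - ε)) : ∃ D, ∀ θ w, |bobkovFlowSpaceDeriv2 f θ w| ≤ D := by
  obtain ⟨M, h₁, h₂, h₃⟩ := hf.exists_abs_deriv_le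
  obtain ⟨D, hD⟩ := exists_abs_bobkovCurvature_le hε M
  exact ⟨D, fun θ w ↦ hD _ (mehler_mem_Icc hf hfε θ w) _ _ _
    (abs_mul_le_of_abs_le_one (abs_sin_le_one θ) (abs_mehler_le h₁ θ w))
    (abs_mul_le_of_abs_le_one (abs_sin_pow_le_one θ 2) (abs_mehler_le h₂ θ w))
    (abs_mul_le_of_abs_le_one (abs_sin_pow_le_one θ 3) (abs_mehler_le h₃ θ w))⟩

theorem monotoneOn_integral_bobkovFlow (hf : BddContDiff 3 f) (hε : 0 < ε)
    (hfε : ∀ x, f x ∈ Icc ε (1 - ε)) :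
    MonotoneOn (fun θ ↦ ∫ w, bobkovFlow f θ w ∂gaussianReal 0 1) (Icc 0 (π / 2)) := by
  obtain ⟨M, hM, -⟩ := hf.exists_abs_deriv_le
  obtain ⟨B, hB⟩ := exists_abs_bobkovFlowAngleDeriv_le hf hε hfε
  obtain ⟨C, hC⟩ := exists_abs_bobkovFlowSpaceDeriv_le hf hε hfε
  obtain ⟨D, hD⟩ := exists_abs_bobkovFlowSpaceDeriv2_le hf hε hfε
  exact monotoneOn_integral_of_divergence_le
    (continuous_uncurry_bobkovFlow (hf.of_le (by norm_num)) hε hfε)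
    (hasDerivAt_bobkovFlow_angle hf hε hfε) (hasDerivAt_bobkovFlowSpaceDeriv hf hε hfε)
    (abs_bobkovFlow_le hM) hB hC hD fun θ hθ ↦ bobkovFlow_subsolution f
      (cos_nonneg_of_neg_pi_div_two_le_of_le (by linarith [hθ.1, pi_pos]) hθ.2.le)

theorem gaussI_integral_le_of_bddContDiff (hf : BddContDiff 3 f) (hε : 0 < ε)
    (hfε : ∀ x, f x ∈ Icc ε (1 - ε)) :
    gaussI (∫ x, f x ∂gaussianReal 0 1) ≤
      ∫ x, bobkovNorm (f x) (deriv f x) ∂gaussianReal 0 1 := by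
  simpa [bobkovFlow, mehler_zero, mehler_pi_div_two, bobkovNorm_zero] using
    monotoneOn_integral_bobkovFlow hf hε hfε (left_mem_Icc.2 pi_div_two_pos.le)
      (right_mem_Icc.2 pi_div_two_pos.le) pi_div_two_pos.le

end BobkovFlow

/-- Bobkov's inequality for the measure `μ` and the function `f`, with `f'` in the role of its
derivative. The profile has its true boundary values here, so that the inequality is stable under
limits. -/
def BobkovInequality {Ω : Type*} [MeasurableSpace Ω] (μ : Measure Ω) (f f' : Ω → ℝ) : Prop :=
  gaussProfile (∫ x, f x ∂μ) ≤ ∫ x, √(gaussProfile (f x) ^ 2 + f' x ^ 2) ∂μ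

section BobkovInequality

variable {Ω : Type*} [MeasurableSpace Ω] {μ : Measure Ω} [IsProbabilityMeasure μ]

theorem sqrt_gaussProfile_le_bobkovNorm (a b : ℝ) :
    √(gaussProfile a ^ 2 + b ^ 2) ≤ bobkovNorm a b :=
  sqrt_le_sqrt (add_le_add_left
    (pow_le_pow_left₀ (gaussProfile_nonneg a) (gaussProfile_le_gaussI a) 2) _)

theorem integrable_bobkovNorm {f f' : Ω → ℝ} (hf : AEMeasurable f μ) (hf' : Integrable f' μ) :
    Integrable (fun x ↦ bobkovNorm (f x) (f' x)) μ := by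
  refine ((integrable_const 1).add hf'.abs).mono' ?_ (ae_of_all _ fun x ↦ ?_)
  · exact (((measurable_gaussI.comp_aemeasurable hf).pow_const 2).add
      (hf'.aemeasurable.pow_const 2)).sqrt.aestronglyMeasurable
  · rw [norm_of_nonneg (bobkovNorm_pos _ _).le]
    exact bobkovNorm_le _ _

theorem BobkovInequality.of_tendsto {F F' : ℕ → Ω → ℝ} {f f' B : Ω → ℝ}
    (hF_meas : ∀ n, Measurable (F n)) (hF'_meas : ∀ n, Measurable (F' n))
    (hF : ∀ n x, F n x ∈ Icc (0 : ℝ) 1) (hF' : ∀ n x, |F' n x| ≤ B x) (hB : Integrable B μ)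
    (hlim : ∀ x, Tendsto (F · x) atTop (𝓝 (f x)))
    (hlim' : ∀ x, Tendsto (F' · x) atTop (𝓝 (f' x)))
    (h : ∀ n, BobkovInequality μ (F n) (F' n)) : BobkovInequality μ f f' := by
  have hf (x : Ω) : f x ∈ Icc (0 : ℝ) 1 :=
    isClosed_Icc.mem_of_tendsto (hlim x) (.of_forall fun n ↦ hF n x)
  have hf_meas : Measurable f :=
    measurable_of_tendsto_metrizable hF_meas (tendsto_pi_nhds.2 hlim)
  have hmean : Tendsto (fun n ↦ ∫ x, F n x ∂μ) atTop (𝓝 (∫ x, f x ∂μ)) :=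
    tendsto_integral_of_dominated_convergence (fun _ ↦ 1)
      (fun n ↦ (hF_meas n).aestronglyMeasurable) (integrable_const 1)
      (fun n ↦ ae_of_all _ fun x ↦ abs_le.2 ⟨by linarith [(hF n x).1], (hF n x).2⟩)
      (ae_of_all _ hlim)
  have hmean_mem := integral_mem_Icc (μ := μ) hf_meas.aemeasurable hf
  have hleft := (continuousOn_gaussProfile _ hmean_mem).tendsto.comp
    (tendsto_nhdsWithin_iff.2 ⟨hmean, .of_forall fun n ↦
      integral_mem_Icc (hF_meas n).aemeasurable (hF n)⟩)
  have hright : Tendsto (fun n ↦ ∫ x, √(gaussProfile (F n x) ^ 2 + F' n x ^ 2) ∂μ) atTop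
      (𝓝 (∫ x, √(gaussProfile (f x) ^ 2 + f' x ^ 2) ∂μ)) := by
    refine tendsto_integral_of_dominated_convergence (fun x ↦ 1 + B x) (fun n ↦ ?_)
      ((integrable_const 1).add hB) (fun n ↦ ae_of_all _ fun x ↦ ?_) (ae_of_all _ fun x ↦ ?_)
    · exact (((measurable_gaussProfile.comp (hF_meas n)).pow_const 2).add
        ((hF'_meas n).pow_const 2)).sqrt.aestronglyMeasurable
    · rw [norm_of_nonneg (sqrt_nonneg _)]
      exact (sqrt_gaussProfile_le_bobkovNorm _ _).trans
        ((bobkovNorm_le _ _).trans (add_le_add_right (hF' n x) 1))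
    · have hprofile := (continuousOn_gaussProfile _ (hf x)).tendsto.comp
        (tendsto_nhdsWithin_iff.2 ⟨hlim x, .of_forall fun n ↦ hF n x⟩)
      exact ((hprofile.pow 2).add ((hlim' x).pow 2)).sqrt
  exact le_of_tendsto_of_tendsto' hleft hright h

theorem BobkovInequality.gaussI_integral_le {f f' : Ω → ℝ} (h : BobkovInequality μ f f')
    (hf_meas : AEMeasurable f μ) (hf : ∀ x, f x ∈ Icc (0 : ℝ) 1) (hf' : Integrable f' μ) :
    gaussI (∫ x, f x ∂μ) ≤ ∫ x, bobkovNorm (f x) (f' x) ∂μ := by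
  have h_int := integrable_bobkovNorm hf_meas hf'
  have hmean := (strictConvex_Icc (0 : ℝ) 1).ae_eq_const_or_average_mem_interior isClosed_Icc
    (ae_of_all μ hf) (.of_mem_Icc 0 1 hf_meas (ae_of_all _ hf))
  rw [average_eq_integral, interior_Icc] at hmean
  rcases hmean with hconst | hmean
  · calc gaussI (∫ x, f x ∂μ) = ∫ _, gaussI (∫ x, f x ∂μ) ∂μ := by simp
      _ ≤ ∫ x, bobkovNorm (f x) (f' x) ∂μ := by
        refine integral_mono_ae (integrable_const _) h_int ?_
        filter_upwards [hconst] with x hx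
        rw [Function.const_apply] at hx
        rw [hx, ← sqrt_sq (gaussI_pos _).le]
        exact sqrt_le_sqrt (le_add_of_nonneg_right (sq_nonneg _))
  · calc gaussI (∫ x, f x ∂μ) = gaussProfile (∫ x, f x ∂μ) := (indicator_of_mem hmean _).symm
      _ ≤ ∫ x, √(gaussProfile (f x) ^ 2 + f' x ^ 2) ∂μ := h
      _ ≤ ∫ x, bobkovNorm (f x) (f' x) ∂μ :=
        integral_mono_of_nonneg (ae_of_all _ fun x ↦ sqrt_nonneg _) h_int
          (ae_of_all _ fun x ↦ sqrt_gaussProfile_le_bobkovNorm _ _)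

end BobkovInequality

theorem BddContDiff.bobkovInequality {f : ℝ → ℝ} {ε : ℝ} (hf : BddContDiff 3 f) (hε : 0 < ε)
    (hfε : ∀ x, f x ∈ Icc ε (1 - ε)) : BobkovInequality (gaussianReal 0 1) f (deriv f) := by
  have hprofile {a : ℝ} (ha : a ∈ Icc ε (1 - ε)) : gaussProfile a = gaussI a :=
    indicator_of_mem (Icc_subset_Ioo hε (sub_lt_self 1 hε) ha) _
  rw [BobkovInequality, hprofile (integral_mem_Icc hf.continuous.aemeasurable hfε)]
  simpa only [hprofile (hfε _), bobkovNorm] using gaussI_integral_le_of_bddContDiff hf hε hfε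

section Approximation

variable {f : ℝ → ℝ}

theorem exists_seq_pos_lt_half_tendsto_zero :
    ∃ δ : ℕ → ℝ, (∀ n, δ n ∈ Ioo 0 (1 / 2)) ∧ Tendsto δ atTop (𝓝 0) :=
  let ⟨δ, _, hδ, hlim⟩ := exists_seq_strictAnti_tendsto' (one_half_pos (α := ℝ))
  ⟨δ, hδ, hlim⟩

theorem bobkovInequality_of_contDiff_three_of_hasCompactSupport (hf : ContDiff ℝ 3 f)
    (hsupp : HasCompactSupport f) (hf01 : ∀ x, f x ∈ Icc (0 : ℝ) 1) :
    BobkovInequality (gaussianReal 0 1) f (deriv f) := by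
  obtain ⟨δ, hδ, hδ_lim⟩ := exists_seq_pos_lt_half_tendsto_zero
  obtain ⟨M, hM⟩ := hsupp.deriv.exists_bound_of_continuous (hf.continuous_deriv (by norm_num))
  let F (n : ℕ) (x : ℝ) : ℝ := δ n + (1 - 2 * δ n) * f x
  have hF_deriv (n : ℕ) : deriv (F n) = fun x ↦ (1 - 2 * δ n) * deriv f x := by
    funext x
    simp only [F, deriv_const_add, deriv_const_mul_field]
  have hF_mem (n : ℕ) (x : ℝ) : F n x ∈ Icc (δ n) (1 - δ n) := by
    have hscale : 0 ≤ 1 - 2 * δ n := by linarith [(hδ n).2]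
    refine ⟨le_add_of_nonneg_right (mul_nonneg hscale (hf01 x).1), ?_⟩
    linarith [mul_le_of_le_one_right hscale (hf01 x).2]
  have hF_bdd (n : ℕ) : BddContDiff 3 (F n) := by
    refine .of_hasCompactSupport_deriv (M := 1) (contDiff_const.add (contDiff_const.mul hf))
      (fun x ↦ abs_le.2 ⟨?_, ?_⟩) (hF_deriv n ▸ hsupp.deriv.mul_left)
    · linarith [(hF_mem n x).1, (hδ n).1]
    · linarith [(hF_mem n x).2, (hδ n).1]
  have hscale_lim : Tendsto (fun n ↦ 1 - 2 * δ n) atTop (𝓝 1) := by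
    simpa using (hδ_lim.const_mul 2).const_sub 1
  refine .of_tendsto (F := F) (F' := fun n ↦ deriv (F n)) (B := fun _ ↦ M)
    (fun n ↦ (hF_bdd n).continuous.measurable) (fun n ↦ measurable_deriv _)
    (fun n x ↦ Icc_subset_Icc (hδ n).1.le (sub_le_self 1 (hδ n).1.le) (hF_mem n x))
    (fun n x ↦ ?_) (integrable_const M)
    (fun x ↦ by simpa using hδ_lim.add (hscale_lim.mul_const (f x)))
    (fun x ↦ by simpa only [hF_deriv, one_mul] using hscale_lim.mul_const (deriv f x))
    fun n ↦ (hF_bdd n).bobkovInequality (hδ n).1 (hF_mem n)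
  rw [hF_deriv]
  exact abs_mul_le_of_abs_le_one
    (abs_le.2 ⟨by linarith [(hδ n).2], by linarith [(hδ n).1]⟩) (hM x)

/-- The mollification of `g`: its convolution with `φ` rescaled to have integral `1`. -/
noncomputable def mollify (φ : ContDiffBump (0 : ℝ)) (g : ℝ → ℝ) : ℝ → ℝ :=
  φ.normed volume ⋆[ContinuousLinearMap.lsmul ℝ ℝ, volume] g

theorem mollify_mem_Icc (φ : ContDiffBump (0 : ℝ)) {g : ℝ → ℝ} (hg : AEStronglyMeasurable g)
    {a b : ℝ} (hgab : ∀ x, g x ∈ Icc a b) (x : ℝ) : mollify φ g x ∈ Icc a b := by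
  simp only [Real.Icc_eq_closedBall] at hgab ⊢
  exact dist_convolution_le (dist_nonneg.trans (hgab x)) φ.support_normed_eq.subset
    φ.nonneg_normed φ.integral_normed hg fun y _ ↦ hgab y

theorem deriv_mollify (φ : ContDiffBump (0 : ℝ)) (hf : ContDiff ℝ 1 f)
    (hsupp : HasCompactSupport f) : deriv (mollify φ f) = mollify φ (deriv f) :=
  funext fun x ↦ (hsupp.hasDerivAt_convolution_right _ φ.integrable_normed.locallyIntegrable
    hf x).deriv

theorem contDiff_mollify (φ : ContDiffBump (0 : ℝ)) {g : ℝ → ℝ} (hg : LocallyIntegrable g)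
    {n : ℕ∞} : ContDiff ℝ n (mollify φ g) :=
  φ.hasCompactSupport_normed.contDiff_convolution_left _ φ.contDiff_normed hg

theorem bobkovInequality_of_contDiff_one_of_hasCompactSupport (hf : ContDiff ℝ 1 f)
    (hsupp : HasCompactSupport f) (hf01 : ∀ x, f x ∈ Icc (0 : ℝ) 1) :
    BobkovInequality (gaussianReal 0 1) f (deriv f) := by
  obtain ⟨δ, hδ, hδ_lim⟩ := exists_seq_pos_lt_half_tendsto_zero
  have hf'_cont : Continuous (deriv f) := hf.continuous_deriv le_rfl
  obtain ⟨M, hM⟩ := hsupp.deriv.exists_bound_of_continuous hf'_cont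
  let φ (n : ℕ) : ContDiffBump (0 : ℝ) := ⟨δ n / 2, δ n, half_pos (hδ n).1, half_lt_self (hδ n).1⟩
  have hsmooth (n : ℕ) : ContDiff ℝ 3 (mollify (φ n) f) :=
    contDiff_mollify (φ n) hf.continuous.locallyIntegrable (n := 3)
  have hmem (n : ℕ) := mollify_mem_Icc (φ n) hf.continuous.aestronglyMeasurable hf01
  refine .of_tendsto (F := fun n ↦ mollify (φ n) f) (F' := fun n ↦ deriv (mollify (φ n) f))
    (B := fun _ ↦ M) (fun n ↦ (hsmooth n).continuous.measurable) (fun n ↦ measurable_deriv _) hmem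
    (fun n x ↦ ?_) (integrable_const M)
    (ContDiffBump.convolution_tendsto_right_of_continuous hδ_lim hf.continuous) (fun x ↦ ?_)
    fun n ↦ bobkovInequality_of_contDiff_three_of_hasCompactSupport (hsmooth n)
      ((φ n).hasCompactSupport_normed.convolution _ hsupp) (hmem n)
  · rw [deriv_mollify _ hf hsupp]
    exact abs_le.2 (mollify_mem_Icc (φ n) hf'_cont.aestronglyMeasurable
      (fun y ↦ abs_le.1 (hM y)) x)
  · simp only [deriv_mollify _ hf hsupp]
    exact ContDiffBump.convolution_tendsto_right_of_continuous hδ_lim hf'_cont x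

theorem exists_seq_cutoff :
    ∃ (χ : ℕ → ℝ → ℝ) (M : ℝ), (∀ n, ContDiff ℝ 1 (χ n)) ∧ (∀ n, HasCompactSupport (χ n)) ∧
      (∀ n x, χ n x ∈ Icc (0 : ℝ) 1) ∧ (∀ n x, |deriv (χ n) x| ≤ M) ∧
      (∀ x, Tendsto (χ · x) atTop (𝓝 1)) ∧ ∀ x, Tendsto (fun n ↦ deriv (χ n) x) atTop (𝓝 0) := by
  obtain ⟨δ, hδ, hδ_lim⟩ := exists_seq_pos_lt_half_tendsto_zero
  let ρ : ContDiffBump (0 : ℝ) := ⟨1, 2, one_pos, one_lt_two⟩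
  have hρ : ContDiff ℝ 1 ρ := ρ.contDiff
  obtain ⟨M, hM⟩ := ρ.hasCompactSupport.deriv.exists_bound_of_continuous
    (hρ.continuous_deriv le_rfl)
  have hderiv (n : ℕ) (x : ℝ) : deriv (fun x ↦ ρ (δ n * x)) x = δ n * deriv ρ (δ n * x) := by
    rw [deriv_comp_mul_left, smul_eq_mul]
  have hbound (n : ℕ) (x : ℝ) : |deriv (fun x ↦ ρ (δ n * x)) x| ≤ δ n * M := by
    rw [hderiv, abs_mul, abs_of_pos (hδ n).1]
    exact mul_le_mul_of_nonneg_left (hM _) (hδ n).1.le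
  refine ⟨fun n x ↦ ρ (δ n * x), M, fun n ↦ hρ.comp (contDiff_const.mul contDiff_id),
    fun n ↦ ρ.hasCompactSupport.comp_homeomorph (Homeomorph.mulLeft₀ (δ n) (hδ n).1.ne'),
    fun n x ↦ ⟨ρ.nonneg, ρ.le_one⟩, fun n x ↦ (hbound n x).trans ?_, fun x ↦ ?_,
    fun x ↦ squeeze_zero_norm (fun n ↦ hbound n x) (by simpa using hδ_lim.mul_const M)⟩
  · exact mul_le_of_le_one_left ((abs_nonneg _).trans (hM 0)) (by linarith [(hδ n).2])
  · have hρ_zero : ρ 0 = 1 := ρ.one_of_mem_closedBall (Metric.mem_closedBall_self zero_le_one)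
    have hδx_lim : Tendsto (fun n ↦ δ n * x) atTop (𝓝 0) := by simpa using hδ_lim.mul_const x
    simpa only [hρ_zero, Function.comp_def] using (hρ.continuous.tendsto 0).comp hδx_lim

theorem bobkovInequality_of_contDiff_one (hf : ContDiff ℝ 1 f) (hf01 : ∀ x, f x ∈ Icc (0 : ℝ) 1)
    (hf' : Integrable (deriv f) (gaussianReal 0 1)) :
    BobkovInequality (gaussianReal 0 1) f (deriv f) := by
  obtain ⟨χ, M, hχ, hχ_supp, hχ_mem, hχ', hχ_lim, hχ'_lim⟩ := exists_seq_cutoff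
  have hderiv (n : ℕ) (x : ℝ) :
      deriv (fun x ↦ χ n x * f x) x = deriv (χ n) x * f x + χ n x * deriv f x :=
    deriv_fun_mul ((hχ n).differentiable one_ne_zero x) (hf.differentiable one_ne_zero x)
  have hsmooth (n : ℕ) : ContDiff ℝ 1 fun x ↦ χ n x * f x := (hχ n).mul hf
  have hmem (n : ℕ) (x : ℝ) : χ n x * f x ∈ Icc (0 : ℝ) 1 :=
    ⟨mul_nonneg (hχ_mem n x).1 (hf01 x).1,
      mul_le_one₀ (hχ_mem n x).2 (hf01 x).1 (hf01 x).2⟩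
  have habs {a : ℝ} (ha : a ∈ Icc (0 : ℝ) 1) : |a| ≤ 1 := by
    rw [abs_of_nonneg ha.1]
    exact ha.2
  refine .of_tendsto (F := fun n x ↦ χ n x * f x) (F' := fun n ↦ deriv fun x ↦ χ n x * f x)
    (B := fun x ↦ M + |deriv f x|) (fun n ↦ (hsmooth n).continuous.measurable)
    (fun n ↦ measurable_deriv _) hmem (fun n x ↦ ?_) ((integrable_const M).add hf'.abs)
    (fun x ↦ by simpa using (hχ_lim x).mul_const (f x)) (fun x ↦ ?_)
    fun n ↦ bobkovInequality_of_contDiff_one_of_hasCompactSupport (hsmooth n)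
      (hχ_supp n).mul_right (hmem n)
  · rw [hderiv, mul_comm (deriv (χ n) x)]
    exact (abs_add_le _ _).trans (add_le_add
      (abs_mul_le_of_abs_le_one (habs (hf01 x)) (hχ' n x))
      (abs_mul_le_of_abs_le_one (habs (hχ_mem n x)) le_rfl))
  · simp only [hderiv]
    simpa using ((hχ'_lim x).mul_const (f x)).add ((hχ_lim x).mul_const (deriv f x))

end Approximation

theorem gaussianReal_eq_map_add_sqrt_mul (m : ℝ) (v : ℝ≥0) :
    gaussianReal m v = (gaussianReal 0 1).map fun x ↦ m + √v * x := by
  have hmul : (gaussianReal 0 1).map (√v * ·) = gaussianReal 0 v := by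
    rw [gaussianReal_map_const_mul, mul_zero]
    congr 1
    ext
    simp
  calc gaussianReal m v = (gaussianReal 0 v).map (m + ·) := by
        rw [gaussianReal_map_const_add, zero_add]
    _ = (gaussianReal 0 1).map fun x ↦ m + √v * x := by
        rw [← hmul, Measure.map_map (by fun_prop) (by fun_prop), Function.comp_def]

theorem stmt19_general (m : ℝ) (v : ℝ≥0) {f : ℝ → ℝ} (hf : ContDiff ℝ 1 f)
    (hf01 : ∀ x, f x ∈ Icc (0 : ℝ) 1) (hf' : Integrable (deriv f) (gaussianReal m v)) :
    gaussI (∫ x, f x ∂gaussianReal m v) ≤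
      ∫ x, √(gaussI (f x) ^ 2 + v * deriv f x ^ 2) ∂gaussianReal m v := by
  have hmap := gaussianReal_eq_map_add_sqrt_mul m v
  have haffine : Measurable fun x : ℝ ↦ m + √v * x := by fun_prop
  have hderiv : deriv (fun x ↦ f (m + √v * x)) = fun x ↦ √v * deriv f (m + √v * x) := by
    funext x
    rw [deriv_comp_mul_left (f := fun x ↦ f (m + x)), deriv_comp_const_add, smul_eq_mul]
  have hsmooth : ContDiff ℝ 1 fun x ↦ f (m + √v * x) := by fun_prop
  have h_int : Integrable (deriv fun x ↦ f (m + √v * x)) (gaussianReal 0 1) :=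
    hderiv ▸ ((hmap ▸ hf').comp_measurable haffine).const_mul _
  have hstd := (bobkovInequality_of_contDiff_one hsmooth (fun x ↦ hf01 _) h_int).gaussI_integral_le
    hsmooth.continuous.aemeasurable (fun x ↦ hf01 _) h_int
  have hmeas : Measurable fun x ↦ √(gaussI (f x) ^ 2 + v * deriv f x ^ 2) :=
    (((measurable_gaussI.comp hf.continuous.measurable).pow_const 2).add
      (((measurable_deriv f).pow_const 2).const_mul _)).sqrt
  rw [hmap, integral_map haffine.aemeasurable hf.continuous.aestronglyMeasurable,
    integral_map haffine.aemeasurable hmeas.aestronglyMeasurable]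
  simpa only [hderiv, bobkovNorm, mul_pow, sq_sqrt v.coe_nonneg] using hstd

/-- Bobkov's inequality for the centered Gaussian measure `γ` of variance `2τ` on `ℝ`:
every smooth `f : ℝ → [0,1]` with bounded derivative satisfies
`I(∫ f dγ) ≤ ∫ √(I(f)² + 2τ f'²) dγ`. -/
theorem stmt19 (τ : ℝ) (hτ : 0 < τ) (f : ℝ → ℝ) (hf : ContDiff ℝ (⊤ : ℕ∞) f)
    (hf01 : ∀ x, f x ∈ Set.Icc (0 : ℝ) 1) (C : ℝ) (hC : ∀ x, |deriv f x| ≤ C) :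
    gaussI (∫ x, f x ∂(gaussianReal 0 ((2 * τ).toNNReal))) ≤
      ∫ x, Real.sqrt (gaussI (f x) ^ 2 + 2 * τ * (deriv f x) ^ 2)
        ∂(gaussianReal 0 ((2 * τ).toNNReal)) := by
  simpa only [coe_toNNReal _ (mul_pos two_pos hτ).le] using stmt19_general 0 (2 * τ).toNNReal
    (hf.of_le (mod_cast le_top)) hf01
    (.of_bound (measurable_deriv f).aestronglyMeasurable C (ae_of_all _ hC))
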